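/- Let G be a graphing and H = (J,F) a hyperfinite spanning subforest of G (F Borel, every component of H a tree, H hyperfinite). Then α(X) = (d̄_H/2)·η_H(X∩F) defines a (countably additive) measure on Borel subsets of E with α ≤ ρ and α(E) = ρ(E). -/

import Mathlib

open MeasureTheory

/-- A graphing: a bounded-degree Borel graph `(J, E)` on a standard Borel space together
with a probability measure `μ` satisfying the measure-preservation (intrinsic
mass-transport) equation `∫_A deg_B = ∫_B deg_A`. -/
structure Graphing (J : Type*) [MeasurableSpace J] where
  /-- the (symmetric) adjacency relation -/
  E : J → J → Prop
  symm : ∀ x y, E x y → E y x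
  measE : MeasurableSet {p : J × J | E p.1 p.2}
  /-- the underlying probability measure -/
  μ : Measure J
  prob : IsProbabilityMeasure μ
  /-- the degree bound -/
  D : ℕ
  degFin : ∀ x, {y | E x y}.Finite
  degBound : ∀ x, ({y | E x y}).ncard ≤ D
  mp : ∀ A B : Set J, MeasurableSet A → MeasurableSet B →
    ∫ x in A, (({y ∈ B | E x y}).ncard : ℝ) ∂μ = ∫ x in B, (({y ∈ A | E x y}).ncard : ℝ) ∂μ

namespace Graphing

variable {J : Type*} [MeasurableSpace J]

/-- The edge set of a graphing, as a (symmetric) set of ordered pairs. -/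
def edgeSet (G : Graphing J) : Set (J × J) := {p | G.E p.1 p.2}

/-- A Borel symmetric subset of the edge set of `G`. -/
def IsEdgeSubset (G : Graphing J) (X : Set (J × J)) : Prop :=
  MeasurableSet X ∧ (∀ x y, (x, y) ∈ X → (y, x) ∈ X) ∧ X ⊆ G.edgeSet

/-- The vertex set of the connected component of `x` in the graph with edge set `X`. -/
def compo (X : Set (J × J)) (x : J) : Set J :=
  {y | Relation.ReflTransGen (fun a b => (a, b) ∈ X) x y}

/-- The number of edges of `X` incident with `x`. -/
noncomputable def degX (X : Set (J × J)) (x : J) : ℕ := ({y | (x, y) ∈ X}).ncard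

/-- The average degree `d̄` of a graphing. -/
noncomputable def avgDeg (G : Graphing J) : ℝ := ∫ x, (({y | G.E x y}).ncard : ℝ) ∂G.μ

/-- The edge measure `η` of a graphing: `η(X) = (1/d̄) ∫ deg_X dμ`. -/
noncomputable def eta (G : Graphing J) (X : Set (J × J)) : ℝ :=
  (∫ x, (degX X x : ℝ) ∂G.μ) / G.avgDeg

/-- The normalized rank `ρ(X) = 1 − E_u(1/|V(G^X_u)|)` of a Borel edge set `X`, with the
convention `1/|V| = 0` for infinite components (`Nat.card` of an infinite set is `0`). -/
noncomputable def rho (G : Graphing J) (X : Set (J × J)) : ℝ :=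
  1 - ∫ x, (1 : ℝ) / (Nat.card ↥(compo X x)) ∂G.μ

/-- A graphing is hyperfinite if edge sets of arbitrarily small edge measure can be
removed so that only finite connected components remain. -/
def Hyperfinite (G : Graphing J) : Prop :=
  ∀ ε : ℝ, 0 < ε → ∃ X : Set (J × J), G.IsEdgeSubset X ∧ G.eta X < ε ∧
    ∀ x : J, (compo (G.edgeSet \ X) x).Finite

/-- A set of edges is a forest if for every edge `(a,b)` there is no path from `a` to `b`
avoiding that edge; equivalently, the graph it spans has no cycles. -/
def IsForestSet (X : Set (J × J)) : Prop :=
  ∀ a b : J, (a, b) ∈ X →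
    ¬ Relation.ReflTransGen
        (fun u v => (u, v) ∈ X ∧ ¬((u = a ∧ v = b) ∨ (u = b ∧ v = a))) a b

/-- A graphing is a forest (all components are trees) if its edge set is a forest. -/
def IsForest (G : Graphing J) : Prop := IsForestSet G.edgeSet

end Graphing

/-- `R` is a countable union of sets satisfying `P`. -/
def IsCountableUnionOf {α : Type*} (P : Set α → Prop) (R : Set α) : Prop :=
  ∃ S : ℕ → Set α, (∀ k, P (S k)) ∧ R = ⋃ k, S k

namespace IsCountableUnionOf

variable {α : Type*} {P : Set α → Prop} {R : Set α}

theorem of_iUnion {ι : Type*} [Countable ι] (h0 : P ∅) {S : ι → Set α} (hS : ∀ i, P (S i)) :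
    IsCountableUnionOf P (⋃ i, S i) := by
  cases isEmpty_or_nonempty ι
  · exact ⟨fun _ => ∅, fun _ => h0, by simp⟩
  · obtain ⟨f, hf⟩ := exists_surjective_nat ι
    exact ⟨S ∘ f, fun k => hS _, (hf.iUnion_comp S).symm⟩

theorem of_mem (h : P R) : IsCountableUnionOf P R :=
  ⟨fun _ => R, fun _ => h, (Set.iUnion_const R).symm⟩

theorem iUnion {ι : Type*} [Countable ι] (h0 : P ∅) {S : ι → Set α}
    (hS : ∀ i, IsCountableUnionOf P (S i)) : IsCountableUnionOf P (⋃ i, S i) := by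
  choose T hT hST using hS
  have : ⋃ i, S i = ⋃ p : ι × ℕ, T p.1 p.2 := by
    rw [Set.iUnion_prod']; exact Set.iUnion_congr hST
  rw [this]
  exact of_iUnion h0 fun p => hT p.1 p.2

theorem measurableSet [MeasurableSpace α] (hm : ∀ S, P S → MeasurableSet S)
    (h : IsCountableUnionOf P R) : MeasurableSet R := by
  obtain ⟨S, hS, rfl⟩ := h
  exact .iUnion fun k => hm _ (hS k)

theorem subset [MeasurableSpace α] (hm : ∀ S, P S → MeasurableSet S)
    (hs : ∀ S T, P S → T ⊆ S → MeasurableSet T → P T)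
    (h : IsCountableUnionOf P R) {R' : Set α} (hR : R' ⊆ R) (hR' : MeasurableSet R') :
    IsCountableUnionOf P R' := by
  obtain ⟨S, hS, rfl⟩ := h
  refine ⟨fun k => S k ∩ R', fun k => hs _ _ (hS k) Set.inter_subset_left
    ((hm _ (hS k)).inter hR'), ?_⟩
  rw [← Set.iUnion_inter]; exact (Set.inter_eq_right.2 hR).symm

theorem exists_disjoint [MeasurableSpace α] (hm : ∀ S, P S → MeasurableSet S)
    (hs : ∀ S T, P S → T ⊆ S → MeasurableSet T → P T)
    (h : IsCountableUnionOf P R) :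
    ∃ S : ℕ → Set α, (∀ k, P (S k)) ∧ Pairwise (Function.onFun Disjoint S) ∧ R = ⋃ k, S k := by
  obtain ⟨S, hS, rfl⟩ := h
  exact ⟨disjointed S, fun k => hs _ _ (hS k) (disjointed_le S k)
    (.disjointed (fun k => hm _ (hS k)) k), disjoint_disjointed S, (iUnion_disjointed).symm⟩

end IsCountableUnionOf

/-- A measurable set in a product which is the graph of a partial function. -/
def IsMeasurableGraph {α β : Type*} [MeasurableSpace α] [MeasurableSpace β]
    (S : Set (α × β)) : Prop :=
  MeasurableSet S ∧ Set.InjOn Prod.fst S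

namespace IsMeasurableGraph

theorem empty {α β : Type*} [MeasurableSpace α] [MeasurableSpace β] :
    IsMeasurableGraph (∅ : Set (α × β)) :=
  ⟨.empty, by simp⟩

theorem mono {α β : Type*} [MeasurableSpace α] [MeasurableSpace β] (S T : Set (α × β))
    (hS : IsMeasurableGraph S) (hT : T ⊆ S) (hm : MeasurableSet T) : IsMeasurableGraph T :=
  ⟨hm, hS.2.mono hT⟩

theorem count_preimage {α β : Type*} [MeasurableSpace α] [MeasurableSpace β]
    [MeasurableSingletonClass β] {S : Set (α × β)} (hS : IsMeasurableGraph S) (x : α) :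
    Measure.count (Prod.mk x ⁻¹' S) = (Prod.fst '' S).indicator (1 : α → ENNReal) x := by
  by_cases hx : x ∈ Prod.fst '' S
  · obtain ⟨⟨x, y⟩, hy, rfl⟩ := hx
    have : Prod.mk x ⁻¹' S = {y} := by
      ext z
      refine ⟨fun hz => ?_, fun hz => ?_⟩
      · exact congrArg Prod.snd (hS.2 hz hy rfl)
      · rw [Set.mem_singleton_iff.1 hz]; exact hy
    have hx : x ∈ Prod.fst '' S := ⟨_, hy, rfl⟩
    simp [this, Set.indicator_of_mem hx]
  · have : Prod.mk x ⁻¹' S = ∅ := by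
      ext z
      exact ⟨fun hz => hx ⟨_, hz, rfl⟩, fun hz => hz.elim⟩
    rw [Set.indicator_of_notMem hx, this, measure_empty]

variable {α : Type*} {β : Type*} [MeasurableSpace α] [StandardBorelSpace α]
  [MeasurableSpace β] [StandardBorelSpace β]

theorem measurableSet_fst_image {S : Set (α × β)} (hS : IsMeasurableGraph S) :
    MeasurableSet (Prod.fst '' S) :=
  hS.1.image_of_measurable_injOn measurable_fst hS.2

theorem measurableSet_fst_image_of_union {R : Set (α × β)}
    (hR : IsCountableUnionOf IsMeasurableGraph R) : MeasurableSet (Prod.fst '' R) := by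
  obtain ⟨S, hS, rfl⟩ := hR
  rw [Set.image_iUnion]
  exact .iUnion fun k => (hS k).measurableSet_fst_image

theorem measurable_count {R : Set (α × β)} (hR : IsCountableUnionOf IsMeasurableGraph R) :
    Measurable fun x => Measure.count (Prod.mk x ⁻¹' R) := by
  obtain ⟨S, hS, hd, rfl⟩ := hR.exists_disjoint (fun S h => h.1) mono
  have : (fun x => Measure.count (Prod.mk x ⁻¹' ⋃ k, S k)) =
      fun x => ∑' k, (Prod.fst '' S k).indicator (1 : α → ENNReal) x := by
    funext x
    rw [Set.preimage_iUnion, measure_iUnion (fun i j hij => (hd hij).preimage _)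
      fun k => measurable_prodMk_left (hS k).1]
    exact tsum_congr fun k => (hS k).count_preimage x
  rw [this]
  exact .tsum fun k => measurable_one.indicator (hS k).measurableSet_fst_image

end IsMeasurableGraph

/-- Lusin–Novikov uniformization for sets with sections of bounded finite size. -/
theorem isCountableUnionOf_isMeasurableGraph_real (n : ℕ) :
    ∀ {α : Type*} [MeasurableSpace α] [StandardBorelSpace α] (R : Set (α × ℝ)),
      MeasurableSet R → (∀ x, (Prod.mk x ⁻¹' R).encard ≤ n) →
      IsCountableUnionOf IsMeasurableGraph R := by
  induction n with
  | zero =>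
    intro α _ _ R _ hn
    have : R = ∅ := by
      ext ⟨x, y⟩
      have h := hn x
      simp only [Nat.cast_zero, nonpos_iff_eq_zero, Set.encard_eq_zero] at h
      exact ⟨fun hy => (h ▸ hy : y ∈ (∅ : Set ℝ)).elim, fun h => h.elim⟩
    rw [this]
    exact .of_mem .empty
  | succ n ih =>
    intro α _ _ R hR hn
    let T : Set ((α × ℝ) × ℝ) := {p | p.1 ∈ R ∧ (p.1.1, p.2) ∈ R ∧ p.2 < p.1.2}
    have hT : MeasurableSet T :=
      (measurable_fst hR).inter (((measurable_fst.fst.prodMk measurable_snd) hR).inter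
        (measurableSet_lt measurable_snd measurable_fst.snd))
    have card_lt : ∀ x y, (x, y) ∈ R → ∀ s ⊆ Prod.mk x ⁻¹' R, y ∉ s → s.encard ≤ n := by
      intro x y hy s hs hys
      have h1 : (insert y s).encard ≤ n + 1 :=
        (Set.encard_le_encard (t := Prod.mk x ⁻¹' R) (Set.insert_subset hy hs)).trans
          (by exact_mod_cast hn x)
      rw [Set.encard_insert_of_notMem hys] at h1
      exact (ENat.add_le_add_iff_right (by simp)).1 h1
    have hTn : ∀ p, (Prod.mk p ⁻¹' T).encard ≤ n := by
      rintro ⟨x, y⟩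
      by_cases hy : (x, y) ∈ R
      · exact card_lt x y hy _ (fun z hz => hz.2.1) (fun hz => lt_irrefl _ hz.2.2)
      · have : Prod.mk (x, y) ⁻¹' T = ∅ := by
          ext z; exact ⟨fun hz => hy hz.1, fun hz => hz.elim⟩
        simp [this]
    have hP : MeasurableSet (Prod.fst '' T) :=
      IsMeasurableGraph.measurableSet_fst_image_of_union (ih T hT hTn)
    have hPR : Prod.fst '' T ⊆ R := by
      rintro _ ⟨p, hp, rfl⟩; exact hp.1
    have hPn : ∀ x, (Prod.mk x ⁻¹' (Prod.fst '' T)).encard ≤ n := by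
      intro x
      by_cases hx : (Prod.mk x ⁻¹' R).Nonempty
      · have hfin : (Prod.mk x ⁻¹' R).Finite :=
          Set.finite_of_encard_le_coe (hn x)
        obtain ⟨y, hy, hmin⟩ := hfin.exists_minimal hx
        refine card_lt x y hy _ (fun z hz => hPR hz) ?_
        rintro ⟨⟨⟨x', y'⟩, z⟩, hz, heq⟩
        obtain ⟨rfl, rfl⟩ := Prod.mk.inj heq
        exact absurd hz.2.2 (not_lt.2 (hmin hz.2.1 hz.2.2.le))
      · have : Prod.mk x ⁻¹' (Prod.fst '' T) = ∅ := by
          ext z; exact ⟨fun hz => hx ⟨z, hPR hz⟩, fun hz => hz.elim⟩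
        simp [this]
    have hmin : IsMeasurableGraph (R \ Prod.fst '' T) := by
      refine ⟨hR.diff hP, ?_⟩
      rintro ⟨x, y⟩ ⟨hy, hyT⟩ ⟨x', y'⟩ ⟨hy', hyT'⟩ heq
      obtain rfl : x = x' := heq
      rcases lt_trichotomy y y' with h | h | h
      · exact absurd ⟨((x, y'), y), ⟨hy', hy, h⟩, rfl⟩ hyT'
      · rw [h]
      · exact absurd ⟨((x, y), y'), ⟨hy, hy', h⟩, rfl⟩ hyT
    have : R = ⋃ b : Bool, cond b (R \ Prod.fst '' T) (Prod.fst '' T) := by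
      rw [← Set.union_eq_iUnion, Set.sdiff_union_of_subset hPR]
    rw [this]
    refine .iUnion .empty fun b => ?_
    cases b
    · exact ih _ hP hPn
    · exact .of_mem hmin

theorem isCountableUnionOf_isMeasurableGraph {α β : Type*} [MeasurableSpace α]
    [StandardBorelSpace α] [MeasurableSpace β] [StandardBorelSpace β] (n : ℕ) (R : Set (α × β))
    (hR : MeasurableSet R) (hn : ∀ x, (Prod.mk x ⁻¹' R).encard ≤ n) :
    IsCountableUnionOf IsMeasurableGraph R := by
  let e := embeddingReal β
  have he : MeasurableEmbedding e := measurableEmbedding_embeddingReal β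
  have hf : MeasurableEmbedding (Prod.map (id : α → α) e) := MeasurableEmbedding.id.prodMap he
  obtain ⟨S, hS, hRS⟩ := isCountableUnionOf_isMeasurableGraph_real n
    (Prod.map id e '' R) (hf.measurableSet_image.2 hR) (fun x => by
      have : Prod.mk x ⁻¹' (Prod.map id e '' R) = e '' (Prod.mk x ⁻¹' R) := by
        ext z
        constructor
        · rintro ⟨⟨a, b⟩, hab, heq⟩
          obtain ⟨rfl, rfl⟩ := Prod.mk.inj heq
          exact ⟨b, hab, rfl⟩
        · rintro ⟨b, hb, rfl⟩
          exact ⟨(x, b), hb, rfl⟩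
      rw [this, he.injective.encard_image]
      exact hn x)
  refine ⟨fun k => Prod.map id e ⁻¹' S k, fun k => ⟨hf.measurable (hS k).1, ?_⟩, ?_⟩
  · intro p hp q hq hpq
    exact hf.injective ((hS k).2 hp hq hpq)
  · rw [← Set.preimage_iUnion, ← hRS, Set.preimage_image_eq _ hf.injective]

theorem isCountableUnionOf_swap {J : Type*} {R : Set (J × J)} {P Q : Set (J × J) → Prop}
    (hPQ : ∀ S, P S → Q (Prod.swap ⁻¹' S)) (hR : IsCountableUnionOf P R) :
    IsCountableUnionOf Q (Prod.swap ⁻¹' R) := by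
  obtain ⟨S, hS, rfl⟩ := hR
  exact ⟨fun k => Prod.swap ⁻¹' S k, fun k => hPQ _ (hS k), Set.preimage_iUnion⟩

section Transport

variable {J : Type*} [MeasurableSpace J]

/-- Integration over `μ` of the counting measures on the sections of `R`. -/
noncomputable def sectionMeasure (μ : Measure J) (R : Set (J × J)) : Measure (J × J) :=
  μ.bind fun x => (Measure.count.restrict (Prod.mk x ⁻¹' R)).map (Prod.mk x)

section sectionMeasure

variable {μ : Measure J} {R : Set (J × J)}

theorem map_restrict_count_apply (R : Set (J × J)) {A : Set (J × J)} (hA : MeasurableSet A)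
    (x : J) :
    (Measure.count.restrict (Prod.mk x ⁻¹' R)).map (Prod.mk x) A =
      Measure.count (Prod.mk x ⁻¹' (R ∩ A)) := by
  rw [Measure.map_apply measurable_prodMk_left hA,
    Measure.restrict_apply (measurable_prodMk_left hA), Set.inter_comm, Set.preimage_inter]

theorem measurable_map_restrict_count [StandardBorelSpace J]
    (hR : IsCountableUnionOf IsMeasurableGraph R) :
    Measurable fun x => (Measure.count.restrict (Prod.mk x ⁻¹' R)).map (Prod.mk x) := by
  refine Measure.measurable_of_measurable_coe _ fun A hA => ?_
  simp_rw [map_restrict_count_apply R hA]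
  exact IsMeasurableGraph.measurable_count (hR.subset (fun S h => h.1) IsMeasurableGraph.mono
    Set.inter_subset_left ((hR.measurableSet fun S h => h.1).inter hA))

theorem sectionMeasure_apply [StandardBorelSpace J]
    (hR : IsCountableUnionOf IsMeasurableGraph R) {A : Set (J × J)}
    (hA : MeasurableSet A) :
    sectionMeasure μ R A = ∫⁻ x, Measure.count (Prod.mk x ⁻¹' (R ∩ A)) ∂μ := by
  rw [sectionMeasure, Measure.bind_apply hA (measurable_map_restrict_count hR).aemeasurable]
  simp_rw [map_restrict_count_apply R hA]

theorem lintegral_sectionMeasure [StandardBorelSpace J]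
    (hR : IsCountableUnionOf IsMeasurableGraph R)
    {φ : J × J → ENNReal} (hφ : Measurable φ) :
    ∫⁻ p, φ p ∂sectionMeasure μ R =
      ∫⁻ x, ∫⁻ y in Prod.mk x ⁻¹' R, φ (x, y) ∂Measure.count ∂μ := by
  rw [sectionMeasure, Measure.lintegral_bind (measurable_map_restrict_count hR).aemeasurable
    hφ.aemeasurable]
  exact lintegral_congr fun x => lintegral_map hφ measurable_prodMk_left

end sectionMeasure

/-- A measurable set which is the graph of a measure-preserving partial bijection. -/
def IsTransportPiece (μ : Measure J) (S : Set (J × J)) : Prop :=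
  IsMeasurableGraph S ∧ IsMeasurableGraph (Prod.swap ⁻¹' S) ∧
    ∀ T ⊆ S, MeasurableSet T → μ (Prod.fst '' T) = μ (Prod.snd '' T)

namespace IsTransportPiece

variable {μ : Measure J}

theorem empty : IsTransportPiece μ ∅ :=
  ⟨.empty, .empty, fun T hT _ => by simp [Set.subset_empty_iff.1 hT]⟩

theorem mono (S T : Set (J × J)) (hS : IsTransportPiece μ S) (hT : T ⊆ S)
    (hm : MeasurableSet T) : IsTransportPiece μ T :=
  ⟨hS.1.mono _ _ hT hm, hS.2.1.mono _ _ (Set.preimage_mono hT) (measurable_swap hm),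
    fun U hU hUm => hS.2.2 U (hU.trans hT) hUm⟩

theorem diagonal [StandardBorelSpace J] : IsTransportPiece μ {p : J × J | p.1 = p.2} := by
  have hm : MeasurableSet {p : J × J | p.1 = p.2} := measurableSet_eq_fun measurable_fst
    measurable_snd
  refine ⟨⟨hm, ?_⟩, ⟨measurable_swap hm, ?_⟩, fun T hT _ => ?_⟩
  · rintro ⟨a, b⟩ h ⟨c, d⟩ h' heq
    simp_all
  · rintro ⟨a, b⟩ h ⟨c, d⟩ h' heq
    simp_all
  · congr 1
    exact Set.image_congr fun p hp => hT hp

theorem comp [StandardBorelSpace J]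
    {S T : Set (J × J)} (hS : IsTransportPiece μ S) (hT : IsTransportPiece μ T) :
    IsTransportPiece μ {p | ∃ z, (p.1, z) ∈ S ∧ (z, p.2) ∈ T} := by
  have fS : ∀ {x y z}, (x, y) ∈ S → (x, z) ∈ S → y = z := fun h h' =>
    congrArg Prod.snd (hS.1.2 h h' rfl)
  have fT : ∀ {x y z}, (x, y) ∈ T → (x, z) ∈ T → y = z := fun h h' =>
    congrArg Prod.snd (hT.1.2 h h' rfl)
  have iS : ∀ {x y z}, (x, z) ∈ S → (y, z) ∈ S → x = y := fun {x y z} h h' =>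
    congrArg Prod.snd (show (z, x) = (z, y) from hS.2.1.2 h h' rfl)
  have iT : ∀ {x y z}, (x, z) ∈ T → (y, z) ∈ T → x = y := fun {x y z} h h' =>
    congrArg Prod.snd (show (z, x) = (z, y) from hT.2.1.2 h h' rfl)
  have hm : MeasurableSet {p : J × J | ∃ z, (p.1, z) ∈ S ∧ (z, p.2) ∈ T} := by
    let W : Set ((J × J) × J) := {q | q.1 ∈ S ∧ (q.1.2, q.2) ∈ T}
    have hW : MeasurableSet W := (measurable_fst hS.1.1).inter
      ((measurable_fst.snd.prodMk measurable_snd) hT.1.1)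
    have : {p : J × J | ∃ z, (p.1, z) ∈ S ∧ (z, p.2) ∈ T} =
        (fun q : (J × J) × J => (q.1.1, q.2)) '' W := by
      ext ⟨x, y⟩
      constructor
      · rintro ⟨z, h, h'⟩
        exact ⟨((x, z), y), ⟨h, h'⟩, rfl⟩
      · rintro ⟨⟨⟨x', z⟩, y'⟩, ⟨h, h'⟩, heq⟩
        obtain ⟨rfl, rfl⟩ := Prod.mk.inj heq
        exact ⟨z, h, h'⟩
    rw [this]
    refine hW.image_of_measurable_injOn (measurable_fst.fst.prodMk measurable_snd) ?_
    rintro ⟨⟨x, z⟩, y⟩ ⟨h, h'⟩ ⟨⟨x', z'⟩, y'⟩ ⟨k, k'⟩ heq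
    obtain ⟨rfl, rfl⟩ := Prod.mk.inj heq
    rw [fS h k]
  have hg : IsMeasurableGraph {p : J × J | ∃ z, (p.1, z) ∈ S ∧ (z, p.2) ∈ T} := by
    refine ⟨hm, ?_⟩
    rintro ⟨x, y⟩ ⟨z, h, h'⟩ ⟨x', y'⟩ ⟨z', k, k'⟩ heq
    obtain rfl : x = x' := heq
    obtain rfl := fS h k
    exact congrArg (Prod.mk x) (fT h' k')
  have hg' : IsMeasurableGraph
      (Prod.swap ⁻¹' {p : J × J | ∃ z, (p.1, z) ∈ S ∧ (z, p.2) ∈ T}) := by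
    refine ⟨measurable_swap hm, ?_⟩
    rintro ⟨y, x⟩ ⟨z, h, h'⟩ ⟨y', x'⟩ ⟨z', k, k'⟩ heq
    obtain rfl : y = y' := heq
    obtain rfl := iT h' k'
    exact congrArg (Prod.mk y) (iS h k)
  refine ⟨hg, hg', fun U hU hUm => ?_⟩
  have mU : MeasurableSet (Prod.fst '' U) := (hg.mono _ _ hU hUm).measurableSet_fst_image
  have mU' : MeasurableSet (Prod.snd '' U) := by
    have := (hg'.mono _ _ (Set.preimage_mono hU) (measurable_swap hUm)).measurableSet_fst_image
    rwa [← Set.image_swap_eq_preimage_swap, Set.image_image] at this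
  have e1 : Prod.fst '' (S ∩ Prod.fst ⁻¹' (Prod.fst '' U)) = Prod.fst '' U := by
    ext x
    constructor
    · rintro ⟨p, ⟨_, hp⟩, rfl⟩
      exact hp
    · rintro ⟨⟨x, y⟩, hp, rfl⟩
      obtain ⟨z, h, h'⟩ := hU hp
      exact ⟨(x, z), ⟨h, _, hp, rfl⟩, rfl⟩
  have e2 : Prod.snd '' (T ∩ Prod.snd ⁻¹' (Prod.snd '' U)) = Prod.snd '' U := by
    ext y
    constructor
    · rintro ⟨p, ⟨_, hp⟩, rfl⟩
      exact hp
    · rintro ⟨⟨x, y⟩, hp, rfl⟩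
      obtain ⟨z, h, h'⟩ := hU hp
      exact ⟨(z, y), ⟨h', _, hp, rfl⟩, rfl⟩
  have e3 : Prod.snd '' (S ∩ Prod.fst ⁻¹' (Prod.fst '' U)) =
      Prod.fst '' (T ∩ Prod.snd ⁻¹' (Prod.snd '' U)) := by
    ext z
    constructor
    · rintro ⟨⟨x, z⟩, ⟨hxz, ⟨⟨x', y⟩, hp, rfl⟩⟩, rfl⟩
      obtain ⟨z', h, h'⟩ := hU hp
      obtain rfl := fS hxz h
      exact ⟨(z, y), ⟨h', _, hp, rfl⟩, rfl⟩
    · rintro ⟨⟨z, y⟩, ⟨hzy, ⟨⟨x, y'⟩, hp, rfl⟩⟩, rfl⟩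
      obtain ⟨z', h, h'⟩ := hU hp
      obtain rfl := iT hzy h'
      exact ⟨(x, z), ⟨h, _, hp, rfl⟩, rfl⟩
  rw [← e1, ← e2, hS.2.2 _ Set.inter_subset_left (hS.1.1.inter (measurable_fst mU)), e3,
    hT.2.2 _ Set.inter_subset_left (hT.1.1.inter (measurable_snd mU'))]

theorem isCountableUnionOf_graph {R : Set (J × J)}
    (hR : IsCountableUnionOf (IsTransportPiece μ) R) : IsCountableUnionOf IsMeasurableGraph R := by
  obtain ⟨S, hS, rfl⟩ := hR
  exact ⟨S, fun k => (hS k).1, rfl⟩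

theorem isCountableUnionOf_graph_swap {R : Set (J × J)}
    (hR : IsCountableUnionOf (IsTransportPiece μ) R) :
    IsCountableUnionOf IsMeasurableGraph (Prod.swap ⁻¹' R) :=
  isCountableUnionOf_swap (fun _ hS => hS.2.1) hR

theorem lintegral_count_eq [StandardBorelSpace J]
    {R : Set (J × J)} (hR : IsCountableUnionOf (IsTransportPiece μ) R) :
    ∫⁻ x, Measure.count (Prod.mk x ⁻¹' R) ∂μ =
      ∫⁻ y, Measure.count (Prod.mk y ⁻¹' (Prod.swap ⁻¹' R)) ∂μ := by
  obtain ⟨S, hS, hd, rfl⟩ := hR.exists_disjoint (fun S h => h.1.1) mono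
  have key : ∀ S : ℕ → Set (J × J), (∀ k, IsMeasurableGraph (S k)) →
      Pairwise (Function.onFun Disjoint S) →
      ∫⁻ x, Measure.count (Prod.mk x ⁻¹' ⋃ k, S k) ∂μ = ∑' k, μ (Prod.fst '' S k) := by
    intro S hS hd
    have : (fun x => Measure.count (Prod.mk x ⁻¹' ⋃ k, S k)) =
        fun x => ∑' k, Measure.count (Prod.mk x ⁻¹' S k) := by
      funext x
      rw [Set.preimage_iUnion, measure_iUnion (fun i j hij => (hd hij).preimage _)
        fun k => measurable_prodMk_left (hS k).1]
    rw [this, lintegral_tsum fun k => (IsMeasurableGraph.measurable_count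
      (.of_mem (hS k))).aemeasurable]
    refine tsum_congr fun k => ?_
    simp_rw [(hS k).count_preimage]
    rw [lintegral_indicator_one (hS k).measurableSet_fst_image]
  rw [key S (fun k => (hS k).1) hd, Set.preimage_iUnion, key _ (fun k => (hS k).2.1)
    fun i j hij => (hd hij).preimage _]
  refine tsum_congr fun k => ?_
  rw [(hS k).2.2 _ subset_rfl (hS k).1.1, ← Set.image_swap_eq_preimage_swap, Set.image_image]
  rfl

/-- The mass transport principle. -/
theorem lintegral_transport [StandardBorelSpace J]
    {R : Set (J × J)} (hR : IsCountableUnionOf (IsTransportPiece μ) R)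
    {φ : J × J → ENNReal} (hφ : Measurable φ) :
    ∫⁻ x, ∫⁻ y in Prod.mk x ⁻¹' R, φ (x, y) ∂Measure.count ∂μ =
      ∫⁻ y, ∫⁻ x in Prod.mk y ⁻¹' (Prod.swap ⁻¹' R), φ (x, y) ∂Measure.count ∂μ := by
  have h : sectionMeasure μ R = (sectionMeasure μ (Prod.swap ⁻¹' R)).map Prod.swap := by
    ext A hA
    rw [Measure.map_apply measurable_swap hA, sectionMeasure_apply (isCountableUnionOf_graph hR) hA,
      sectionMeasure_apply (isCountableUnionOf_graph_swap hR) (measurable_swap hA),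
      ← Set.preimage_inter]
    exact lintegral_count_eq (hR.subset (fun S h => h.1.1) mono Set.inter_subset_left
      ((hR.measurableSet fun S h => h.1.1).inter hA))
  rw [← lintegral_sectionMeasure (isCountableUnionOf_graph hR) hφ, h,
    lintegral_map hφ measurable_swap]
  exact lintegral_sectionMeasure (isCountableUnionOf_graph_swap hR) (hφ.comp measurable_swap)

end IsTransportPiece

end Transport

namespace Graphing

section Components

variable {J : Type*}

theorem mem_compo_symm {X : Set (J × J)} (hs : ∀ x y, (x, y) ∈ X → (y, x) ∈ X) {x y : J}
    (h : y ∈ compo X x) : x ∈ compo X y := by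
  induction h with
  | refl => exact Relation.ReflTransGen.refl
  | tail _ hbc ih => exact Relation.ReflTransGen.head (hs _ _ hbc) ih

theorem compo_eq {X : Set (J × J)} (hs : ∀ x y, (x, y) ∈ X → (y, x) ∈ X) {x y : J}
    (h : y ∈ compo X x) : compo X y = compo X x := by
  ext z
  exact ⟨fun hz => Relation.ReflTransGen.trans h hz,
    fun hz => Relation.ReflTransGen.trans (mem_compo_symm hs h) hz⟩

theorem compo_mono {X Y : Set (J × J)} (h : X ⊆ Y) (x : J) : compo X x ⊆ compo Y x :=
  fun y hy => Relation.ReflTransGen.mono (fun _ _ hab => h hab) x y hy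

theorem IsForestSet.mono {X Y : Set (J × J)} (hY : IsForestSet Y) (h : X ⊆ Y) : IsForestSet X :=
  fun a b hab hp => hY a b (h hab) (Relation.ReflTransGen.mono (fun _ _ hq => ⟨h hq.1, hq.2⟩) _ _ hp)

theorem IsForestSet.sum_degX {X : Set (J × J)} (hX : IsForestSet X)
    (hs : ∀ x y, (x, y) ∈ X → (y, x) ∈ X) (x : J) (hfin : (compo X x).Finite) :
    ∑ y ∈ hfin.toFinset, degX X y + 2 = 2 * hfin.toFinset.card := by
  classical
  let T : SimpleGraph (compo X x) :=
    { Adj := fun a b => (a.1, b.1) ∈ X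
      symm := ⟨fun a b h => hs _ _ h⟩
      loopless := ⟨fun a h => hX a a h .refl⟩ }
  have : Fintype (compo X x) := hfin.fintype
  have : Nonempty (compo X x) := ⟨⟨x, .refl⟩⟩
  have hreach : ∀ y (hy : y ∈ compo X x), T.Reachable ⟨x, .refl⟩ ⟨y, hy⟩ := by
    intro y hy
    induction hy with
    | refl => exact .refl _
    | tail hxb hbc ih => exact ih.trans (SimpleGraph.Adj.reachable (G := T)
        (u := ⟨_, hxb⟩) (v := ⟨_, hxb.tail hbc⟩) hbc)
  have htree : T.IsTree := by
    refine ⟨⟨fun a b => (hreach a a.2).symm.trans (hreach b b.2)⟩, ?_⟩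
    rw [SimpleGraph.isAcyclic_iff_forall_adj_isBridge]
    intro a b hab
    rw [SimpleGraph.isBridge_iff, SimpleGraph.reachable_iff_reflTransGen]
    intro hp
    refine hX a b hab (Relation.ReflTransGen.lift Subtype.val (fun u v huv => ?_) _ _ hp)
    rw [SimpleGraph.deleteEdges_adj] at huv
    refine ⟨huv.1, fun h => huv.2 ?_⟩
    rw [Set.mem_singleton_iff, Sym2.eq_iff]
    simpa only [Subtype.ext_iff] using h
  have hdeg : ∀ a, T.degree a = degX X a := by
    intro a
    have : {y | (a.1, y) ∈ X} = Subtype.val '' T.neighborSet a := by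
      ext y
      constructor
      · intro h
        exact ⟨⟨y, a.2.tail h⟩, h, rfl⟩
      · rintro ⟨b, hb, rfl⟩
        exact hb
    rw [degX, this, Set.ncard_image_of_injective _ Subtype.val_injective,
      ← SimpleGraph.card_neighborSet_eq_degree, ← Nat.card_eq_fintype_card]
    rfl
  have h1 := htree.card_edgeFinset
  have h2 := T.sum_degrees_eq_twice_card_edges
  have h3 : ∑ y ∈ hfin.toFinset, degX X y = ∑ a : compo X x, degX X a :=
    Finset.sum_subtype _ (fun y => hfin.mem_toFinset) _
  have h4 : hfin.toFinset.card = Fintype.card (compo X x) := by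
    rw [← Set.ncard_eq_toFinset_card _ hfin, ← Nat.card_eq_fintype_card]
    rfl
  simp_rw [hdeg] at h2
  omega

theorem compo_sdiff_eq_or_exists {X Z : Set (J × J)} (x : J) :
    compo X x ⊆ compo (X \ Z) x ∨ ∃ y ∈ compo (X \ Z) x, ∃ z, (y, z) ∈ Z := by
  by_contra! h
  refine h.1 fun y hy => ?_
  induction hy with
  | refl => exact .refl
  | tail _ hbc ih => exact Relation.ReflTransGen.tail ih ⟨hbc, h.2 _ ih _⟩

end Components

section EdgeSubset

variable {J : Type*} [MeasurableSpace J] (G : Graphing J)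

/-- The pairs of vertices in the same component of the graph with edge set `X`. -/
def connRel (X : Set (J × J)) : Set (J × J) := {p | p.2 ∈ compo X p.1}

theorem encard_edgeSet_le (x : J) : (Prod.mk x ⁻¹' G.edgeSet).encard ≤ G.D := by
  have h : (Prod.mk x ⁻¹' G.edgeSet).encard = ({y | G.E x y}.ncard : ℕ∞) :=
    (G.degFin x).cast_ncard_eq.symm
  rw [h]
  exact_mod_cast G.degBound x

theorem isCountableUnionOf_graph_edgeSet [StandardBorelSpace J]
    : IsCountableUnionOf IsMeasurableGraph G.edgeSet :=
  isCountableUnionOf_isMeasurableGraph G.D _ G.measE G.encard_edgeSet_le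

theorem swap_preimage_edgeSet : Prod.swap ⁻¹' G.edgeSet = G.edgeSet := by
  ext ⟨x, y⟩
  exact ⟨G.symm _ _, G.symm _ _⟩

theorem finite_section {X : Set (J × J)} (hX : X ⊆ G.edgeSet) (x : J) :
    (Prod.mk x ⁻¹' X).Finite :=
  (G.degFin x).subset fun _ hy => hX hy

theorem count_section [StandardBorelSpace J] {X : Set (J × J)} (hX : X ⊆ G.edgeSet) (x : J) :
    Measure.count (Prod.mk x ⁻¹' X) = degX X x := by
  rw [Measure.count_apply_finite _ (G.finite_section hX x), degX,
    ← Set.ncard_eq_toFinset_card _ (G.finite_section hX x)]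
  rfl

theorem isCountableUnionOf_graph_of_subset [StandardBorelSpace J]
    {X : Set (J × J)} (hm : MeasurableSet X)
    (hX : X ⊆ G.edgeSet) : IsCountableUnionOf IsMeasurableGraph X :=
  G.isCountableUnionOf_graph_edgeSet.subset (fun _ h => h.1) IsMeasurableGraph.mono hX hm

theorem measurable_degX [StandardBorelSpace J] {X : Set (J × J)} (hm : MeasurableSet X)
    (hX : X ⊆ G.edgeSet) : Measurable fun x => (degX X x : ENNReal) := by
  simp_rw [← G.count_section hX]
  exact IsMeasurableGraph.measurable_count (G.isCountableUnionOf_graph_of_subset hm hX)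

theorem degX_le {X : Set (J × J)} (hX : X ⊆ G.edgeSet) (x : J) : degX X x ≤ G.D :=
  (Set.ncard_le_ncard (t := {y | G.E x y}) (fun _ hy => hX hy) (G.degFin x)).trans (G.degBound x)

theorem lintegral_degX_ne_top {X : Set (J × J)} (hX : X ⊆ G.edgeSet) :
    ∫⁻ x, (degX X x : ENNReal) ∂G.μ ≠ ⊤ := by
  have := G.prob
  refine ne_top_of_le_ne_top (ENNReal.natCast_ne_top G.D) ?_
  calc ∫⁻ x, (degX X x : ENNReal) ∂G.μ ≤ ∫⁻ _, (G.D : ENNReal) ∂G.μ :=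
        lintegral_mono fun x => Nat.cast_le.2 (G.degX_le hX x)
    _ = G.D := by simp

theorem setIntegral_degX [StandardBorelSpace J]
    {X : Set (J × J)} (hm : MeasurableSet X) (hX : X ⊆ G.edgeSet)
    (A : Set J) :
    ∫ x in A, (degX X x : ℝ) ∂G.μ = (∫⁻ x in A, (degX X x : ENNReal) ∂G.μ).toReal := by
  rw [← integral_toReal (G.measurable_degX hm hX).aemeasurable (.of_forall fun x => by simp)]
  simp

theorem integral_degX [StandardBorelSpace J]
    {X : Set (J × J)} (hm : MeasurableSet X) (hX : X ⊆ G.edgeSet) :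
    ∫ x, (degX X x : ℝ) ∂G.μ = (∫⁻ x, (degX X x : ENNReal) ∂G.μ).toReal := by
  simpa using G.setIntegral_degX hm hX Set.univ

theorem sectionMeasure_edgeSet_prod [StandardBorelSpace J]
    {A B : Set J} (hA : MeasurableSet A) (hB : MeasurableSet B) :
    sectionMeasure G.μ G.edgeSet (A ×ˢ B) =
      ENNReal.ofReal (∫ x in A, (({y ∈ B | G.E x y}).ncard : ℝ) ∂G.μ) := by
  have hm : MeasurableSet (G.edgeSet ∩ Set.univ ×ˢ B) :=
    G.measE.inter (MeasurableSet.univ.prod hB)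
  have hX : G.edgeSet ∩ Set.univ ×ˢ B ⊆ G.edgeSet := Set.inter_subset_left
  have e : ∀ x, {y ∈ B | G.E x y}.ncard = degX (G.edgeSet ∩ Set.univ ×ˢ B) x := fun x => by
    unfold degX
    congr 1
    ext y
    simp [edgeSet, and_comm]
  simp_rw [e]
  rw [G.setIntegral_degX hm hX, ENNReal.ofReal_toReal
    (ne_top_of_le_ne_top (G.lintegral_degX_ne_top hX) (setLIntegral_le_lintegral _ _)),
    sectionMeasure_apply G.isCountableUnionOf_graph_edgeSet (hA.prod hB),
    ← lintegral_indicator hA]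
  refine lintegral_congr fun x => ?_
  by_cases hx : x ∈ A
  · rw [Set.indicator_of_mem hx, ← G.count_section hX]
    congr 1
    ext y
    simp [hx]
  · rw [Set.indicator_of_notMem hx]
    have : Prod.mk x ⁻¹' (G.edgeSet ∩ A ×ˢ B) = ∅ := by
      ext y
      simp [hx]
    rw [this, measure_empty]

theorem map_swap_sectionMeasure_edgeSet [StandardBorelSpace J] :
    (sectionMeasure G.μ G.edgeSet).map Prod.swap = sectionMeasure G.μ G.edgeSet := by
  have : IsFiniteMeasure (sectionMeasure G.μ G.edgeSet) := by
    refine ⟨?_⟩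
    rw [← Set.univ_prod_univ, G.sectionMeasure_edgeSet_prod .univ .univ]
    exact ENNReal.ofReal_lt_top
  refine Measure.ext_prod fun {A B} hA hB => ?_
  rw [Measure.map_apply measurable_swap (hA.prod hB), Set.preimage_swap_prod,
    G.sectionMeasure_edgeSet_prod hB hA, G.sectionMeasure_edgeSet_prod hA hB, G.mp A B hA hB]

theorem isTransportPiece_of_subset_edgeSet [StandardBorelSpace J]
    {S : Set (J × J)} (hS : IsMeasurableGraph S)
    (hS' : IsMeasurableGraph (Prod.swap ⁻¹' S)) (hSE : S ⊆ G.edgeSet) :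
    IsTransportPiece G.μ S := by
  have key : ∀ T ⊆ G.edgeSet, IsMeasurableGraph T →
      sectionMeasure G.μ G.edgeSet T = G.μ (Prod.fst '' T) := by
    intro T hTE hT
    rw [sectionMeasure_apply G.isCountableUnionOf_graph_edgeSet hT.1,
      Set.inter_eq_right.2 hTE]
    simp_rw [hT.count_preimage]
    rw [lintegral_indicator_one hT.measurableSet_fst_image]
  refine ⟨hS, hS', fun T hT hTm => ?_⟩
  have hT' : Prod.swap ⁻¹' T ⊆ G.edgeSet := by
    rw [← G.swap_preimage_edgeSet]
    exact Set.preimage_mono (hT.trans hSE)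
  rw [← key T (hT.trans hSE) (hS.mono _ _ hT hTm), ← G.map_swap_sectionMeasure_edgeSet,
    Measure.map_apply measurable_swap hTm,
    key _ hT' (hS'.mono _ _ (Set.preimage_mono hT) (measurable_swap hTm)),
    ← Set.image_swap_eq_preimage_swap, Set.image_image]
  rfl

theorem isCountableUnionOf_transport_edgeSet [StandardBorelSpace J] :
    IsCountableUnionOf (IsTransportPiece G.μ) G.edgeSet := by
  obtain ⟨S, hS, hE⟩ := G.isCountableUnionOf_graph_edgeSet
  have : G.edgeSet = ⋃ p : ℕ × ℕ, S p.1 ∩ Prod.swap ⁻¹' S p.2 := by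
    ext ⟨x, y⟩
    rw [Set.mem_iUnion]
    constructor
    · intro h
      have h' : (y, x) ∈ G.edgeSet := G.symm _ _ h
      rw [hE, Set.mem_iUnion] at h h'
      obtain ⟨i, hi⟩ := h
      obtain ⟨j, hj⟩ := h'
      exact ⟨(i, j), hi, hj⟩
    · rintro ⟨p, hp, -⟩
      rw [hE]
      exact Set.mem_iUnion.2 ⟨_, hp⟩
  rw [this]
  refine .of_iUnion .empty fun p => G.isTransportPiece_of_subset_edgeSet
    ((hS p.1).mono _ _ Set.inter_subset_left ((hS p.1).1.inter (measurable_swap (hS p.2).1)))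
    ((hS p.2).mono _ _ (fun q hq => by simpa using hq.2)
      (measurable_swap ((hS p.1).1.inter (measurable_swap (hS p.2).1)))) ?_
  rw [this]
  exact Set.subset_iUnion (fun p : ℕ × ℕ => S p.1 ∩ Prod.swap ⁻¹' S p.2) p

theorem isCountableUnionOf_transport_comp [StandardBorelSpace J] {μ : Measure J} {R T : Set (J × J)}
    (hR : IsCountableUnionOf (IsTransportPiece μ) R)
    (hT : IsCountableUnionOf (IsTransportPiece μ) T) :
    IsCountableUnionOf (IsTransportPiece μ) {p | ∃ z, (p.1, z) ∈ R ∧ (z, p.2) ∈ T} := by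
  obtain ⟨S, hS, rfl⟩ := hR
  obtain ⟨U, hU, rfl⟩ := hT
  have : {p : J × J | ∃ z, (p.1, z) ∈ ⋃ k, S k ∧ (z, p.2) ∈ ⋃ k, U k} =
      ⋃ q : ℕ × ℕ, {p : J × J | ∃ z, (p.1, z) ∈ S q.1 ∧ (z, p.2) ∈ U q.2} := by
    ext p
    simp only [Set.mem_iUnion, Set.mem_ofPred_eq, Prod.exists]
    constructor
    · rintro ⟨z, ⟨i, hi⟩, ⟨j, hj⟩⟩
      exact ⟨i, j, z, hi, hj⟩
    · rintro ⟨i, j, z, hi, hj⟩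
      exact ⟨z, ⟨i, hi⟩, ⟨j, hj⟩⟩
  rw [this]
  exact .of_iUnion .empty fun q => (hS q.1).comp (hU q.2)

theorem isCountableUnionOf_transport_connRel [StandardBorelSpace J]
    {X : Set (J × J)} (hm : MeasurableSet X)
    (hX : X ⊆ G.edgeSet) : IsCountableUnionOf (IsTransportPiece G.μ) (connRel X) := by
  have hX' := G.isCountableUnionOf_transport_edgeSet.subset (fun S h => h.1.1)
    IsTransportPiece.mono hX hm
  let R : ℕ → Set (J × J) := fun n => n.rec {p | p.1 = p.2}
    fun _ T => {p | ∃ z, (p.1, z) ∈ T ∧ (z, p.2) ∈ X}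
  have hR : ∀ n, IsCountableUnionOf (IsTransportPiece G.μ) (R n) := fun n => by
    induction n with
    | zero => exact .of_mem .diagonal
    | succ n ih => exact isCountableUnionOf_transport_comp ih hX'
  have : connRel X = ⋃ n, R n := by
    ext ⟨x, y⟩
    rw [Set.mem_iUnion]
    constructor
    · intro (h : Relation.ReflTransGen (fun a b => (a, b) ∈ X) x y)
      induction h with
      | refl => exact ⟨0, rfl⟩
      | tail _ hbc ih =>
        obtain ⟨n, hn⟩ := ih
        exact ⟨n + 1, _, hn, hbc⟩
    · rintro ⟨n, hn⟩
      induction n generalizing y with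
      | zero =>
        obtain rfl : x = y := hn
        exact Relation.ReflTransGen.refl
      | succ n ih =>
        obtain ⟨z, hz, hzy⟩ := hn
        exact Relation.ReflTransGen.tail (ih z hz) hzy
  rw [this]
  exact .iUnion .empty hR

theorem measurable_count_compo [StandardBorelSpace J]
    {X : Set (J × J)} (hm : MeasurableSet X) (hX : X ⊆ G.edgeSet) :
    Measurable fun x => Measure.count (compo X x) :=
  IsMeasurableGraph.measurable_count (R := connRel X)
    (IsTransportPiece.isCountableUnionOf_graph (G.isCountableUnionOf_transport_connRel hm hX))

theorem measurable_inv_count_compo [StandardBorelSpace J] {X : Set (J × J)} (hm : MeasurableSet X)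
    (hX : X ⊆ G.edgeSet) : Measurable fun x => (Measure.count (compo X x))⁻¹ :=
  (G.measurable_count_compo hm hX).inv

theorem lintegral_compo_average [StandardBorelSpace J] {X : Set (J × J)} (hX : G.IsEdgeSubset X)
    (hfin : ∀ x, (compo X x).Finite) {g : J → ENNReal} (hg : Measurable g) :
    ∫⁻ x, (∫⁻ y in compo X x, g y ∂Measure.count) * (Measure.count (compo X x))⁻¹ ∂G.μ =
      ∫⁻ x, g x ∂G.μ := by
  have hc := G.measurable_inv_count_compo hX.1 hX.2.2
  have hR := G.isCountableUnionOf_transport_connRel hX.1 hX.2.2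
  have hswap : Prod.swap ⁻¹' connRel X = connRel X := by
    ext ⟨x, y⟩
    exact ⟨mem_compo_symm hX.2.1, mem_compo_symm hX.2.1⟩
  have h := IsTransportPiece.lintegral_transport hR
    (φ := fun p => g p.2 * (Measure.count (compo X p.2))⁻¹)
    ((hg.comp measurable_snd).mul (hc.comp measurable_snd))
  rw [hswap] at h
  have hmeas : ∀ x, MeasurableSet (compo X x) := fun x => (hfin x).measurableSet
  calc _ = ∫⁻ x, ∫⁻ y in Prod.mk x ⁻¹' connRel X,
        g y * (Measure.count (compo X y))⁻¹ ∂Measure.count ∂G.μ := by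
        refine lintegral_congr fun x => ?_
        rw [← lintegral_mul_const _ hg]
        refine setLIntegral_congr_fun (hmeas x) fun y hy => ?_
        simp only [compo_eq hX.2.1 hy]
    _ = _ := h
    _ = _ := by
        refine lintegral_congr fun y => ?_
        have h0 : Measure.count (compo X y) ≠ 0 :=
          Measure.count_ne_zero ⟨y, Relation.ReflTransGen.refl⟩
        have ht : Measure.count (compo X y) ≠ ⊤ :=
          (Measure.count_apply_lt_top.2 (hfin y)).ne
        change ∫⁻ _ in compo X y, g y * (Measure.count (compo X y))⁻¹ ∂Measure.count = g y
        rw [setLIntegral_const]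
        rw [mul_assoc, ENNReal.inv_mul_cancel h0 ht, mul_one]

theorem IsEdgeSubset.inter {G : Graphing J} {X Y : Set (J × J)} (hX : G.IsEdgeSubset X)
    (hY : G.IsEdgeSubset Y) : G.IsEdgeSubset (X ∩ Y) :=
  ⟨hX.1.inter hY.1, fun x y h => ⟨hX.2.1 x y h.1, hY.2.1 x y h.2⟩,
    Set.inter_subset_left.trans hX.2.2⟩

theorem IsEdgeSubset.diff {G : Graphing J} {X Y : Set (J × J)} (hX : G.IsEdgeSubset X)
    (hY : G.IsEdgeSubset Y) : G.IsEdgeSubset (X \ Y) :=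
  ⟨hX.1.diff hY.1, fun x y h => ⟨hX.2.1 x y h.1, fun h' => h.2 (hY.2.1 y x h')⟩,
    Set.sdiff_subset.trans hX.2.2⟩

theorem IsForestSet.lintegral_degX [MeasurableSingletonClass J] {X : Set (J × J)}
    (hX : IsForestSet X) (hs : ∀ x y, (x, y) ∈ X → (y, x) ∈ X) (x : J)
    (hfin : (compo X x).Finite) :
    ∫⁻ y in compo X x, (degX X y : ENNReal) ∂Measure.count + 2 =
      2 * Measure.count (compo X x) := by
  rw [Measure.count_apply_finite _ hfin]
  conv_lhs => rw [← hfin.coe_toFinset]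
  rw [lintegral_finset]
  simp only [Measure.count_singleton, mul_one]
  exact_mod_cast hX.sum_degX hs x hfin

/-- The expected reciprocal of the component size. -/
noncomputable def invComp (X : Set (J × J)) : ENNReal :=
  ∫⁻ x, (Measure.count (compo X x))⁻¹ ∂G.μ

theorem one_le_count_compo (X : Set (J × J)) (x : J) : 1 ≤ Measure.count (compo X x) := by
  calc (1 : ENNReal) ≤ Measure.count {x} := by
        refine le_trans ?_ (Measure.le_count_apply (s := {x}))
        simp
    _ ≤ _ := measure_mono (Set.singleton_subset_iff.2 Relation.ReflTransGen.refl)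

theorem invComp_le_one (X : Set (J × J)) : G.invComp X ≤ 1 := by
  have := G.prob
  calc G.invComp X ≤ ∫⁻ _, 1 ∂G.μ :=
        lintegral_mono fun x => ENNReal.inv_le_one.2 (one_le_count_compo X x)
    _ = 1 := by simp

theorem invComp_anti {X Y : Set (J × J)} (h : X ⊆ Y) : G.invComp Y ≤ G.invComp X :=
  lintegral_mono fun x => ENNReal.inv_le_inv.2 (measure_mono (compo_mono h x))

theorem rho_eq [StandardBorelSpace J]
    {X : Set (J × J)} (hm : MeasurableSet X) (hX : X ⊆ G.edgeSet) :
    G.rho X = 1 - (G.invComp X).toReal := by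
  rw [rho, invComp, ← integral_toReal (G.measurable_inv_count_compo hm hX).aemeasurable
    (.of_forall fun x => lt_of_le_of_lt (ENNReal.inv_le_one.2 (one_le_count_compo X x)) (by simp))]
  congr 2
  funext x
  rw [one_div, ENNReal.toReal_inv]
  congr 1
  rcases (compo X x).finite_or_infinite with h | h
  · rw [Measure.count_apply_finite _ h, ← Set.ncard_eq_toFinset_card _ h]
    rfl
  · have := h.to_subtype
    rw [Measure.count_apply_infinite h, Nat.card_eq_zero_of_infinite]
    simp

theorem lintegral_degX_add_invComp [StandardBorelSpace J] {X : Set (J × J)} (hX : G.IsEdgeSubset X)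
    (hfor : IsForestSet X) (hfin : ∀ x, (compo X x).Finite) :
    ∫⁻ x, (degX X x : ENNReal) ∂G.μ + 2 * G.invComp X = 2 := by
  have := G.prob
  have hc := G.measurable_inv_count_compo hX.1 hX.2.2
  rw [← G.lintegral_compo_average hX hfin (G.measurable_degX hX.1 hX.2.2), invComp,
    ← lintegral_const_mul _ hc, ← lintegral_add_right _ (hc.const_mul 2)]
  calc _ = ∫⁻ _, 2 ∂G.μ := by
        refine lintegral_congr fun x => ?_
        have h0 : Measure.count (compo X x) ≠ 0 :=
          Measure.count_ne_zero ⟨x, Relation.ReflTransGen.refl⟩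
        have ht : Measure.count (compo X x) ≠ ⊤ :=
          (Measure.count_apply_lt_top.2 (hfin x)).ne
        rw [← add_mul, hfor.lintegral_degX hX.2.1 x (hfin x), mul_assoc,
          ENNReal.mul_inv_cancel h0 ht, mul_one]
    _ = 2 := by simp

theorem degX_le_add {X Z : Set (J × J)} (hX : X ⊆ G.edgeSet) (hZ : Z ⊆ G.edgeSet) (x : J) :
    degX X x ≤ degX (X \ Z) x + degX Z x := by
  refine (Set.ncard_le_ncard (t := {y | (x, y) ∈ X \ Z} ∪ {y | (x, y) ∈ Z}) (fun y hy => ?_)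
    ((G.finite_section (Set.sdiff_subset.trans hX) x).union (G.finite_section hZ x))).trans
    (Set.ncard_union_le _ _)
  by_cases h : (x, y) ∈ Z
  · exact Or.inr h
  · exact Or.inl ⟨hy, h⟩

theorem lintegral_degX_le_add [StandardBorelSpace J]
    {X Z : Set (J × J)} (hX : X ⊆ G.edgeSet) (hZm : MeasurableSet Z)
    (hZ : Z ⊆ G.edgeSet) :
    ∫⁻ x, (degX X x : ENNReal) ∂G.μ ≤
      ∫⁻ x, (degX (X \ Z) x : ENNReal) ∂G.μ + ∫⁻ x, (degX Z x : ENNReal) ∂G.μ := by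
  rw [← lintegral_add_right _ (G.measurable_degX hZm hZ)]
  exact lintegral_mono fun x => (Nat.cast_le.2 (G.degX_le_add hX hZ x)).trans_eq (Nat.cast_add _ _)

theorem lintegral_degX_mono {X Y : Set (J × J)} (h : X ⊆ Y) (hY : Y ⊆ G.edgeSet) :
    ∫⁻ x, (degX X x : ENNReal) ∂G.μ ≤ ∫⁻ x, (degX Y x : ENNReal) ∂G.μ :=
  lintegral_mono fun x => Nat.cast_le.2
    (Set.ncard_le_ncard (t := {y | (x, y) ∈ Y}) (fun _ hy => h hy)
      ((G.degFin x).subset fun _ hy => hY hy))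

theorem invComp_sdiff_le [StandardBorelSpace J]
    {X Z : Set (J × J)} (hX : G.IsEdgeSubset X) (hZ : G.IsEdgeSubset Z)
    (hfin : ∀ x, (compo (X \ Z) x).Finite) :
    G.invComp (X \ Z) ≤ G.invComp X + ∫⁻ x, (degX Z x : ENNReal) ∂G.μ := by
  rw [← G.lintegral_compo_average (hX.diff hZ) hfin (G.measurable_degX hZ.1 hZ.2.2), invComp, invComp,
    ← lintegral_add_left (G.measurable_inv_count_compo hX.1 hX.2.2)]
  refine lintegral_mono fun x => ?_
  rcases compo_sdiff_eq_or_exists (X := X) (Z := Z) x with h | ⟨y, hy, z, hz⟩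
  · exact le_add_right (ENNReal.inv_le_inv.2 (measure_mono h))
  · refine le_add_left ?_
    conv_lhs => rw [← one_mul (Measure.count _)⁻¹]
    gcongr
    have hd : 1 ≤ degX Z y := by
      rw [Nat.one_le_iff_ne_zero]
      exact (Set.ncard_pos (G.finite_section hZ.2.2 y)).2 ⟨z, hz⟩ |>.ne'
    calc (1 : ENNReal) ≤ degX Z y := by exact_mod_cast hd
      _ = ∫⁻ w in {y}, (degX Z w : ENNReal) ∂Measure.count := by simp
      _ ≤ _ := lintegral_mono_set (Set.singleton_subset_iff.2 hy)

theorem lintegral_degX_le_of_eta_lt [StandardBorelSpace J]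
    {Z : Set (J × J)} (hZ : G.IsEdgeSubset Z) {δ : ℝ}
    (hδ : 0 < δ) (h : G.eta Z < δ / (G.D + 1)) :
    ∫⁻ x, (degX Z x : ENNReal) ∂G.μ ≤ ENNReal.ofReal δ := by
  have := G.prob
  have hE : G.avgDeg = (∫⁻ x, (degX G.edgeSet x : ENNReal) ∂G.μ).toReal :=
    G.integral_degX G.measE subset_rfl
  have hle : (∫⁻ x, (degX Z x : ENNReal) ∂G.μ).toReal ≤ G.avgDeg := by
    rw [hE]
    exact ENNReal.toReal_mono (G.lintegral_degX_ne_top subset_rfl)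
      (G.lintegral_degX_mono hZ.2.2 subset_rfl)
  have hD : G.avgDeg ≤ G.D := by
    rw [hE]
    refine ENNReal.toReal_le_of_le_ofReal (Nat.cast_nonneg _) ?_
    calc ∫⁻ x, (degX G.edgeSet x : ENNReal) ∂G.μ ≤ ∫⁻ _, (G.D : ENNReal) ∂G.μ :=
          lintegral_mono fun x => Nat.cast_le.2 (G.degX_le subset_rfl x)
      _ = _ := by simp
  refine (ENNReal.le_ofReal_iff_toReal_le (G.lintegral_degX_ne_top hZ.2.2) hδ.le).2 ?_
  rw [eta, G.integral_degX hZ.1 hZ.2.2] at h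
  have h0 : 0 ≤ G.avgDeg := hE ▸ ENNReal.toReal_nonneg
  rcases h0.eq_or_lt with h0 | h0
  · exact (hle.trans h0.ge).trans hδ.le
  · rw [div_lt_iff₀ h0] at h
    refine h.le.trans ?_
    rw [div_mul_eq_mul_div, div_le_iff₀ (by positivity)]
    nlinarith

theorem degX_iUnion [StandardBorelSpace J] {f : ℕ → Set (J × J)} (hf : ∀ n, G.IsEdgeSubset (f n))
    (hd : Pairwise (Function.onFun Disjoint f)) (x : J) :
    (degX (⋃ n, f n) x : ENNReal) = ∑' n, (degX (f n) x : ENNReal) := by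
  simp_rw [← G.count_section (hf _).2.2,
    ← G.count_section (Set.iUnion_subset fun n => (hf n).2.2)]
  rw [Set.preimage_iUnion, measure_iUnion (fun i j hij => (hd hij).preimage _)
    fun k => measurable_prodMk_left (hf k).1]

end EdgeSubset

end Graphing

/-- Let `G` be a graphing and `F` a hyperfinite spanning subforest of
`G` (Borel, every component a tree, same connected components as `G`, hyperfinite as a
subgraphing). Then `α(X) = (d̄_H/2)·η_H(X∩F) = (1/2)∫ deg_{X∩F} dμ` defines a countably
additive measure on Borel subsets of `E` with `α ≤ ρ` and `α(E) = ρ(E)`. -/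
theorem Graphing.spanning_forest_minorizing_measure {J : Type*} [MeasurableSpace J]
    [StandardBorelSpace J] (G : Graphing J) (F : Set (J × J))
    (hF : G.IsEdgeSubset F) (hforest : Graphing.IsForestSet F)
    (hspan : ∀ x : J, Graphing.compo F x = Graphing.compo G.edgeSet x)
    (hhyp : ∀ ε : ℝ, 0 < ε → ∃ X : Set (J × J), G.IsEdgeSubset X ∧ X ⊆ F ∧
      G.eta X < ε ∧ ∀ x : J, (Graphing.compo (F \ X) x).Finite) :
    (∀ X : Set (J × J), G.IsEdgeSubset X →
        (1/2) * ∫ x, (Graphing.degX (X ∩ F) x : ℝ) ∂G.μ ≤ G.rho X) ∧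
    ((1/2) * ∫ x, (Graphing.degX (G.edgeSet ∩ F) x : ℝ) ∂G.μ = G.rho G.edgeSet) ∧
    (∀ f : ℕ → Set (J × J), (∀ n, G.IsEdgeSubset (f n)) →
        Pairwise (Function.onFun Disjoint f) →
        (1/2) * ∫ x, (Graphing.degX ((⋃ n, f n) ∩ F) x : ℝ) ∂G.μ =
          ∑' n, (1/2) * ∫ x, (Graphing.degX (f n ∩ F) x : ℝ) ∂G.μ) := by
  have hε : ∀ δ : ℝ, 0 < δ → ∃ Z, G.IsEdgeSubset Z ∧
      ∫⁻ x, (degX Z x : ENNReal) ∂G.μ ≤ ENNReal.ofReal δ ∧ ∀ x, (compo (F \ Z) x).Finite := by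
    intro δ hδ
    obtain ⟨Z, hZ, -, hη, hfin⟩ := hhyp (δ / (G.D + 1)) (by positivity)
    exact ⟨Z, hZ, G.lintegral_degX_le_of_eta_lt hZ hδ hη, hfin⟩
  have hle : ∀ X : Set (J × J), G.IsEdgeSubset X →
      (1/2) * ∫ x, (degX (X ∩ F) x : ℝ) ∂G.μ ≤ G.rho X := by
    intro X hX
    have hY : G.IsEdgeSubset (X ∩ F) := hX.inter hF
    have key : ∫⁻ x, (degX (X ∩ F) x : ENNReal) ∂G.μ + 2 * G.invComp X ≤ 2 := by
      refine ENNReal.le_of_forall_pos_le_add fun δ hδ _ => ?_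
      obtain ⟨Z, hZ, hZδ, hfin⟩ := hε δ hδ
      rw [ENNReal.ofReal_coe_nnreal] at hZδ
      calc _ ≤ (∫⁻ x, (degX ((X ∩ F) \ Z) x : ENNReal) ∂G.μ + δ) +
            2 * G.invComp ((X ∩ F) \ Z) := by
            gcongr
            · exact (G.lintegral_degX_le_add hY.2.2 hZ.1 hZ.2.2).trans (by gcongr)
            · exact G.invComp_anti (Set.sdiff_subset.trans Set.inter_subset_left)
        _ = (∫⁻ x, (degX ((X ∩ F) \ Z) x : ENNReal) ∂G.μ +
            2 * G.invComp ((X ∩ F) \ Z)) + δ := by ring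
        _ = 2 + δ := by
            rw [G.lintegral_degX_add_invComp (hY.diff hZ)
              (hforest.mono (Set.sdiff_subset.trans Set.inter_subset_right))
              fun x => (hfin x).subset
                (compo_mono (Set.sdiff_subset_sdiff_left Set.inter_subset_right) x)]
    rw [G.rho_eq hX.1 hX.2.2, G.integral_degX hY.1 hY.2.2]
    have h := ENNReal.toReal_mono (by simp) key
    rw [ENNReal.toReal_add (G.lintegral_degX_ne_top hY.2.2)
      (ENNReal.mul_ne_top (by simp) (ne_top_of_le_ne_top (by simp) (G.invComp_le_one X))),
      ENNReal.toReal_mul] at h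
    norm_num at h
    linarith
  refine ⟨hle, le_antisymm (hle _ ⟨G.measE, G.symm, subset_rfl⟩) ?_, ?_⟩
  · have key : 2 ≤ ∫⁻ x, (degX F x : ENNReal) ∂G.μ + 2 * G.invComp F := by
      refine ENNReal.le_of_forall_pos_le_add fun δ hδ _ => ?_
      obtain ⟨Z, hZ, hZδ, hfin⟩ := hε (δ / 2) (by positivity)
      calc 2 = ∫⁻ x, (degX (F \ Z) x : ENNReal) ∂G.μ + 2 * G.invComp (F \ Z) :=
            (G.lintegral_degX_add_invComp (hF.diff hZ) (hforest.mono Set.sdiff_subset) hfin).symm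
        _ ≤ ∫⁻ x, (degX F x : ENNReal) ∂G.μ +
            2 * (G.invComp F + ENNReal.ofReal (δ / 2)) := by
            refine add_le_add (G.lintegral_degX_mono Set.sdiff_subset hF.2.2) ?_
            gcongr
            exact (G.invComp_sdiff_le hF hZ hfin).trans (by gcongr)
        _ = _ := by
            rw [mul_add, ← add_assoc]
            congr 1
            rw [← ENNReal.ofReal_ofNat, ← ENNReal.ofReal_mul (by norm_num),
              mul_div_cancel₀ _ (by norm_num), ENNReal.ofReal_coe_nnreal]
    have hc : G.invComp G.edgeSet = G.invComp F := by
      simp_rw [invComp, hspan]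
    rw [G.rho_eq (X := G.edgeSet) G.measE subset_rfl, hc, Set.inter_eq_right.2 hF.2.2,
      G.integral_degX hF.1 hF.2.2]
    have hd := G.lintegral_degX_ne_top hF.2.2
    have hi : 2 * G.invComp F ≠ ⊤ :=
      ENNReal.mul_ne_top (by simp) (ne_top_of_le_ne_top (by simp) (G.invComp_le_one F))
    have h := ENNReal.toReal_mono (ENNReal.add_ne_top.2 ⟨hd, hi⟩) key
    rw [ENNReal.toReal_add hd hi, ENNReal.toReal_mul] at h
    norm_num at h
    linarith
  · intro f hf hd
    have hfF : ∀ n, G.IsEdgeSubset (f n ∩ F) := fun n => (hf n).inter hF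
    have hU : (⋃ n, f n ∩ F) ⊆ G.edgeSet := Set.iUnion_subset fun n => (hfF n).2.2
    rw [tsum_mul_left, Set.iUnion_inter, G.integral_degX (.iUnion fun n => (hfF n).1) hU]
    simp_rw [G.integral_degX (hfF _).1 (hfF _).2.2]
    rw [← ENNReal.tsum_toReal_eq fun n => G.lintegral_degX_ne_top (hfF n).2.2,
      ← lintegral_tsum fun n => (G.measurable_degX (hfF n).1 (hfF n).2.2).aemeasurable]
    simp_rw [G.degX_iUnion hfF fun i j hij =>
      (hd hij).mono Set.inter_subset_left Set.inter_subset_left]
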